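/- arXiv:1912.05226 — 3 statements merged into one kernel-verified Lean document; each statement's English description precedes it below -/
import Mathlib

section
/- Let L be a nonempty countable linear order with a least element. Let D_m denote the set of all many-one degrees other than deg_m(∅) and deg_m(ℕ), partially ordered by many-one reducibility. Then there exists a subset S of D_m that is downward closed in D_m (i.e., if d ∈ S, d' ∈ D_m and d' ≤ d, then d' ∈ S) and is order-isomorphic to L. -/
namespace MDeg

set_option linter.unusedSectionVars false

theorem comp_search {α : Type*} [Primcodable α] {p : α → ℕ → Bool} (hp : Computable₂ p)
    (h : ∀ a, ∃ n, p a n = true) :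
    ∃ q : α → ℕ, Computable q ∧ ∀ a, p a (q a) = true ∧ ∀ m, p a m = true → q a ≤ m := by
  classical
  refine ⟨fun a => Nat.find (h a), ?_, fun a => ⟨Nat.find_spec (h a), fun m hm => Nat.find_min' _ hm⟩⟩
  refine Partrec.of_eq_tot (Partrec.rfind hp.partrec₂) ?_
  intro a
  rw [Nat.mem_rfind]
  refine ⟨?_, fun {m} hm => ?_⟩
  · simpa using Nat.find_spec (h a)
  · simpa using Nat.find_min (h a) hm

theorem comp_incr {k : ℕ → ℕ} (hk : Computable k) (hu : ∀ s, ∃ z, s < k z) :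
    ∃ q : ℕ → ℕ, Computable q ∧ StrictMono q ∧ ∀ m, 0 < q m ∧ ∃ z, k z = q m := by
  have hp : Computable₂ (fun s z : ℕ => decide (s < k z)) :=
    (Primrec.nat_lt.decide.to_comp).comp Computable.fst (hk.comp Computable.snd)
  obtain ⟨w, hw, hws⟩ := comp_search hp (fun s => by simpa using hu s)
  let q : ℕ → ℕ := fun m => Nat.rec (motive := fun _ => ℕ) (k (w 0)) (fun _ IH => k (w IH)) m
  have hlt : ∀ s, s < k (w s) := fun s => by simpa using (hws s).1
  refine ⟨q, ?_, ?_, ?_⟩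
  · exact Computable.nat_rec (f := fun m : ℕ => m) (g := fun _ => k (w 0))
      (h := fun _ p => k (w p.2)) Computable.id (Computable.const _)
      (hk.comp (hw.comp (Computable.snd.comp Computable.snd)))
  · exact strictMono_nat_of_lt_succ fun n => hlt (q n)
  · intro m
    cases m with
    | zero => exact ⟨hlt 0, _, rfl⟩
    | succ m => exact ⟨lt_of_le_of_lt (Nat.zero_le _) (hlt (q m)), _, rfl⟩

theorem comp_pick {β : Type*} [Primcodable β] {k : ℕ → ℕ} (hk : Computable k)
    (hu : ∀ s, ∃ z, s < k z) {u : ℕ → β} (hcu : Computable u) :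
    ∃ c : ℕ → β, Computable c ∧ (∀ n, ∃ m, c n = u m) ∧ ∀ m, ∃ z, 0 < k z ∧ c (k z) = u m := by
  obtain ⟨q, hq, hm, hr⟩ := comp_incr hk hu
  have hp : Computable₂ (fun n m : ℕ => decide (n ≤ q m)) :=
    (Primrec.nat_le.decide.to_comp).comp Computable.fst (hq.comp Computable.snd)
  obtain ⟨w, hw, hws⟩ := comp_search hp (fun n => ⟨n, by simpa using hm.le_apply⟩)
  refine ⟨fun n => u (w n), hcu.comp hw, fun n => ⟨_, rfl⟩, fun m => ?_⟩
  obtain ⟨h0, z, hz⟩ := hr m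
  refine ⟨z, by omega, ?_⟩
  have h1 := hws (q m)
  have : w (q m) = m := by
    apply le_antisymm
    · exact h1.2 m (by simp)
    · exact hm.le_iff_le.1 (by simpa using h1.1)
  simp [hz, this]

variable {L : Type*} [LinearOrder L] [Primcodable L]

/-- tokens -/
abbrev Tok (L : Type*) := Bool ⊕ (L × ℕ)

theorem prim_mem (s : Finset L) : PrimrecPred (fun x : L => x ∈ s) := by
  induction s using Finset.induction_on with
  | empty => exact PrimrecPred.of_eq (p := fun _ => False) ⟨inferInstance, by simpa using Primrec.const false⟩ (by simp)
  | insert a s _ ih =>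
    exact ((Primrec.eq.comp Primrec.id (Primrec.const a)).or ih).of_eq (by simp)

/-- Substitution built from a map on columns. -/
def ext (c : L × ℕ → Tok L) : Tok L → Tok L := fun t => Sum.casesOn t Sum.inl c

theorem comp_ext {c : L × ℕ → Tok L} (hc : Computable c) : Computable (ext c) :=
  Computable.sumCasesOn (f := fun t : Tok L => t) (g := fun _ b => Sum.inl b) (h := fun _ y => c y)
    Computable.id (Computable.sumInl.comp Computable.snd) (hc.comp Computable.snd)

theorem comp_ite {α β : Type*} [Primcodable α] [Primcodable β] {P : α → Prop} [DecidablePred P]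
    (hP : PrimrecPred P) {f g : α → β} (hf : Computable f) (hg : Computable g) :
    Computable (fun a => if P a then f a else g a) :=
  (Computable.cond (hP.decide.to_comp) hf hg).of_eq fun a => by
    by_cases h : P a <;> simp [h]

/-- Tokens allowed below `l`. -/
def In (b : L) (F : Finset L) (l : L) : Set (Tok L) :=
  {t | ∀ y, t = Sum.inr y → y.1 ∈ F ∧ y.1 ≤ l ∧ y.1 ≠ b}

@[simp] theorem in_inl {b : L} {F : Finset L} {l : L} {v : Bool} : (Sum.inl v : Tok L) ∈ In b F l := by
  simp [In]

@[simp] theorem in_inr {b : L} {F : Finset L} {l : L} {y : L × ℕ} : (Sum.inr y : Tok L) ∈ In b F l ↔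
    y.1 ∈ F ∧ y.1 ≤ l ∧ y.1 ≠ b := by
  constructor
  · intro h
    exact h y rfl
  · intro h z hz
    rw [← Sum.inr.inj hz]
    exact h

theorem exists_enum (b : L) (F : Finset L) (l : L) :
    ∃ u : ℕ → Tok L, Computable u ∧ Set.range u = In b F l := by
  classical
  let s := F.filter (fun x => x ≤ l ∧ x ≠ b)
  let c : L × ℕ → Tok L := fun y => if y.1 ∈ s then Sum.inr y else Sum.inl false
  have hc : Computable c := comp_ite ((prim_mem s).comp Primrec.fst) Computable.sumInr (Computable.const _)
  refine ⟨fun n => ext c ((Encodable.decode (α := Tok L) n).getD (Sum.inl false)),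
    (comp_ext hc).comp (Computable.option_getD Computable.decode (Computable.const _)), ?_⟩
  ext t
  constructor
  · rintro ⟨n, rfl⟩
    dsimp only
    generalize (Encodable.decode (α := Tok L) n).getD (Sum.inl false) = t
    rcases t with v | y
    · simp [ext]
    · by_cases h : y.1 ∈ s
      · simp only [ext, c, h, if_true, in_inr]
        simpa [s] using h
      · simp [ext, c, h]
  · intro ht
    refine ⟨Encodable.encode t, ?_⟩
    dsimp only
    rw [Encodable.encodek, Option.getD_some]
    rcases t with v | y
    · simp [ext]
    · have h : y.1 ∈ s := by simpa [s] using ht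
      simp [ext, c, h]

/-- Forcing conditions. -/
structure Cond (b : L) where
  F : Finset L
  g : L → ℕ → Tok L
  comp : ∀ l ∈ F, Computable (g l)
  rng : ∀ l ∈ F, Set.range (g l) = In b F l

instance (b : L) : Preorder (Cond b) where
  le p q := p.F ⊆ q.F ∧ ∃ τ : Tok L → Tok L, (∀ v, τ (Sum.inl v) = Sum.inl v) ∧
    ∀ l ∈ p.F, ∀ z, q.g l z = τ (p.g l z)
  le_refl p := ⟨subset_rfl, id, fun _ => rfl, fun _ _ _ => rfl⟩
  le_trans p q r := by
    rintro ⟨h1, τ, h2, h3⟩ ⟨k1, ρ, k2, k3⟩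
    refine ⟨h1.trans k1, ρ ∘ τ, fun v => by simp [h2, k2], fun l hl z => ?_⟩
    rw [k3 l (h1 hl), h3 l hl]; rfl

theorem le_def {b : L} {p q : Cond b} : p ≤ q ↔ p.F ⊆ q.F ∧ ∃ τ : Tok L → Tok L,
    (∀ v, τ (Sum.inl v) = Sum.inl v) ∧ ∀ l ∈ p.F, ∀ z, q.g l z = τ (p.g l z) := Iff.rfl

theorem apply_subst {b : L} (p : Cond b) {c : L × ℕ → Tok L} (hc : Computable c)
    (h : ∀ l ∈ p.F, ext c '' In b p.F l = In b p.F l) :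
    ∃ q : Cond b, p ≤ q ∧ q.F = p.F ∧ ∀ l z, q.g l z = ext c (p.g l z) := by
  refine ⟨⟨p.F, fun l z => ext c (p.g l z), fun l hl => (comp_ext hc).comp (p.comp l hl),
    fun l hl => ?_⟩, ⟨subset_rfl, ext c, fun _ => rfl, fun _ _ _ => rfl⟩, rfl, fun _ _ => rfl⟩
  rw [← h l hl, ← p.rng l hl, ← Set.range_comp]; rfl

/-- Truncation of the columns in `s`. -/
theorem truncate {b : L} (p : Cond b) (s : Finset L) (N : ℕ) (v : Bool) :
    ∃ q : Cond b, p ≤ q ∧ q.F = p.F ∧ ∀ l z, q.g l z = ext (fun y => if y.1 ∈ s then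
      (if y.2 < N then Sum.inl v else Sum.inr (y.1, y.2 - N)) else Sum.inr y) (p.g l z) := by
  classical
  apply apply_subst
  · refine comp_ite ((prim_mem s).comp Primrec.fst) (comp_ite
      (Primrec.nat_lt.comp Primrec.snd (Primrec.const N)) (Computable.const _) ?_) Computable.sumInr
    exact Computable.sumInr.comp (Computable.pair Computable.fst
      (Primrec.nat_sub.to_comp.comp Computable.snd (Computable.const N)))
  · intro l hl
    ext t
    constructor
    · rintro ⟨t, ht, rfl⟩
      rcases t with v | ⟨x, n⟩
      · simp [ext]
      · simp only [in_inr] at ht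
        simp only [ext]
        split_ifs <;> simp [ht]
    · intro ht
      rcases t with v | ⟨x, n⟩
      · exact ⟨Sum.inl v, by simp, rfl⟩
      · simp only [in_inr] at ht
        by_cases hx : x ∈ s
        · exact ⟨Sum.inr (x, n + N), by simpa using ht, by simp [ext, hx]⟩
        · exact ⟨Sum.inr (x, n), by simpa using ht, by simp [ext, hx]⟩

theorem add_point {b : L} (hbot : ∀ x, b ≤ x) (p : Cond b) (l : L) : ∃ q : Cond b, p ≤ q ∧ l ∈ q.F := by
  classical
  by_cases hl : l ∈ p.F
  · exact ⟨p, le_rfl, hl⟩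
  -- it suffices to find a substitution
  suffices H : ∃ c : L × ℕ → Tok L, Computable c ∧
      ∀ k ∈ p.F, ext c '' In b p.F k = In b (insert l p.F) k by
    obtain ⟨c, hc, hr⟩ := H
    obtain ⟨u, hu, hur⟩ := exists_enum b (insert l p.F) l
    refine ⟨⟨insert l p.F, fun k z => if k = l then u z else ext c (p.g k z), ?_, ?_⟩,
      ⟨Finset.subset_insert _ _, ext c, fun _ => rfl, ?_⟩, Finset.mem_insert_self _ _⟩
    · intro k hk
      by_cases h : k = l
      · simpa [h] using hu
      · have hk' : k ∈ p.F := by simpa [h] using hk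
        simpa [h] using (comp_ext hc).comp (p.comp k hk')
    · intro k hk
      by_cases h : k = l
      · simpa [h] using hur
      · have hk' : k ∈ p.F := by simpa [h] using hk
        simp only [h, if_false]
        rw [← hr k hk', ← p.rng k hk', ← Set.range_comp]; rfl
    · intro k hk z
      have : k ≠ l := fun h => hl (h ▸ hk)
      simp [this]
  by_cases hx : l ≠ b ∧ (p.F.filter (fun x => l < x)).Nonempty
  · obtain ⟨hb, hne⟩ := hx
    obtain ⟨x, hxm, hmin⟩ := (p.F.filter (fun x => l < x)).exists_minimal hne
    have hxF : x ∈ p.F := (Finset.mem_filter.1 hxm).1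
    have hlx : l < x := (Finset.mem_filter.1 hxm).2
    have hmin' : ∀ y ∈ p.F, l < y → x ≤ y := fun y hy hly => by
      by_contra hcon
      exact hcon (hmin (Finset.mem_filter.2 ⟨hy, hly⟩) (le_of_lt (not_le.1 hcon)))
    have hxb : x ≠ b := fun h => absurd (hbot l) (not_le.2 (h ▸ hlx))
    have hiff : ∀ k ∈ p.F, l ≤ k → x ≤ k := fun k hk h =>
      hmin' k hk (lt_of_le_of_ne h (fun h => hl (h ▸ hk)))
    refine ⟨fun y => if y.1 = x then (if y.2 % 2 = 1 then Sum.inr (l, y.2 / 2)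
      else Sum.inr (x, y.2 / 2)) else Sum.inr y, ?_, ?_⟩
    · have hdiv : Computable (fun y : L × ℕ => y.2 / 2) :=
        Primrec.nat_div.to_comp.comp Computable.snd (Computable.const 2)
      refine comp_ite (Primrec.eq.comp Primrec.fst (Primrec.const x)) (comp_ite
        (Primrec.eq.comp (Primrec.nat_mod.comp Primrec.snd (Primrec.const 2)) (Primrec.const 1)) ?_ ?_)
        Computable.sumInr
      · exact Computable.sumInr.comp (Computable.pair (Computable.const l) hdiv)
      · exact Computable.sumInr.comp (Computable.pair (Computable.const x) hdiv)
    · intro k hk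
      ext t
      constructor
      · rintro ⟨t, ht, rfl⟩
        rcases t with v | ⟨y, n⟩
        · simp [ext]
        · simp only [in_inr] at ht
          simp only [ext]
          split_ifs with h1 h2
          · subst h1
            simp [hb, (hlx.le.trans ht.2.1)]
          · subst h1
            simp [ht]
          · simp [ht]
      · intro ht
        rcases t with v | ⟨y, n⟩
        · exact ⟨Sum.inl v, by simp, rfl⟩
        · simp only [in_inr, Finset.mem_insert] at ht
          by_cases hyx : y = x
          · subst hyx
            refine ⟨Sum.inr (y, 2 * n), ?_, ?_⟩
            · simp [hxF, ht]
            · simp [ext]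
          · by_cases hyl : y = l
            · subst hyl
              refine ⟨Sum.inr (x, 2 * n + 1), ?_, ?_⟩
              · simp [hxF, hxb, hiff k hk ht.2.1]
              · simp only [ext, if_true]
                rw [if_pos (by omega)]
                congr 2
                omega
            · refine ⟨Sum.inr (y, n), ?_, ?_⟩
              · simp only [in_inr]; tauto
              · simp [ext, hyx]
  · refine ⟨Sum.inr, Computable.sumInr, fun k hk => ?_⟩
    have : ext (Sum.inr : L × ℕ → Tok L) = id := by
      funext t; rcases t with v | y <;> rfl
    rw [this, Set.image_id]
    ext t
    rcases t with v | ⟨y, n⟩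
    · simp
    · simp only [in_inr, Finset.mem_insert]
      constructor
      · tauto
      · rintro ⟨rfl | h, h2, h3⟩
        · exfalso
          refine hx ⟨h3, k, ?_⟩
          exact Finset.mem_filter.2 ⟨hk, lt_of_le_of_ne h2 (fun h => hl (h ▸ hk))⟩
        · tauto


theorem collapse {b : L} (p : Cond b) {l j : L} (hl : l ∈ p.F) (hj : j ∈ p.F) (hjb : j ≠ b)
    {f : ℕ → ℕ} (hf : Computable f) (hr : ∀ z, p.g l (f z) ∈ In b p.F j)
    (hinf : {n | ∃ z, p.g l (f z) = Sum.inr (j, n)}.Infinite) :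
    ∃ q : Cond b, p ≤ q ∧ q.F = p.F ∧ Set.range (fun z => q.g l (f z)) = Set.range (q.g j) := by
  classical
  -- the position in column `j`, plus one
  let pos : Tok L → ℕ := fun t =>
    Sum.casesOn t (fun _ => 0) (fun y => if y.1 = j then y.2 + 1 else 0)
  have hpos : Computable pos := by
    refine Computable.sumCasesOn (f := fun t : Tok L => t) (g := fun _ _ => 0)
      (h := fun _ y => if y.1 = j then y.2 + 1 else 0) Computable.id (Computable.const 0) ?_
    exact comp_ite (P := fun w : Tok L × L × ℕ => w.2.1 = j)
      (Primrec.eq.comp (Primrec.fst.comp Primrec.snd) (Primrec.const j))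
      (Computable.succ.comp (Computable.snd.comp Computable.snd)) (Computable.const 0)
  have hk : Computable (fun z => pos (p.g l (f z))) := hpos.comp ((p.comp l hl).comp hf)
  obtain ⟨u, hu, hur⟩ := exists_enum b p.F j
  obtain ⟨c, hc, hcu, hcs⟩ := comp_pick hk (fun s => by
    obtain ⟨n, ⟨z, hz⟩, hn⟩ := hinf.exists_gt s
    exact ⟨z, by simp only [hz, pos, if_true]; omega⟩) hu
  have hcin : ∀ n, c n ∈ In b p.F j := fun n => by
    obtain ⟨m, hm⟩ := hcu n
    rw [hm, ← hur]; exact ⟨m, rfl⟩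
  let C : L × ℕ → Tok L := fun y => if y.1 = j then c (y.2 + 1) else Sum.inr y
  have hC : Computable C :=
    comp_ite (Primrec.eq.comp Primrec.fst (Primrec.const j))
      (hc.comp (Computable.succ.comp Computable.snd)) Computable.sumInr
  -- every token below `j` is hit by the range of `h`
  have hit : ∀ t ∈ In b p.F j, ∃ z, ext C (p.g l (f z)) = t ∧ ∃ n, p.g l (f z) = Sum.inr (j, n) := by
    intro t ht
    rw [← hur] at ht
    obtain ⟨m, rfl⟩ := ht
    obtain ⟨z, hz0, hz⟩ := hcs m
    refine ⟨z, ?_⟩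
    generalize p.g l (f z) = t at hz0 hz
    rcases t with v | ⟨x, n⟩
    · simp [pos] at hz0
    · by_cases hx : x = j
      · subst hx
        simp only [pos, if_true] at hz
        exact ⟨by simp [ext, C, hz], n, rfl⟩
      · simp [pos, hx] at hz0
  have mono : ∀ k, j ≤ k → In b p.F j ⊆ In b p.F k := by
    intro k hjk t ht
    rcases t with v | y
    · simp
    · simp only [in_inr] at ht ⊢
      exact ⟨ht.1, ht.2.1.trans hjk, ht.2.2⟩
  have maps : ∀ k, ∀ t ∈ In b p.F k, ext C t ∈ In b p.F k := by
    intro k t ht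
    rcases t with v | ⟨x, n⟩
    · simp [ext]
    · by_cases hx : x = j
      · subst hx
        simp only [ext, C, if_true]
        exact mono k (in_inr.1 ht).2.1 (hcin _)
      · simpa [ext, C, hx] using ht
  obtain ⟨q, hpq, hqF, hq⟩ := apply_subst p hC (by
    intro k hk
    ext t
    constructor
    · rintro ⟨t, ht, rfl⟩
      exact maps k t ht
    · intro ht
      rcases t with v | ⟨x, n⟩
      · exact ⟨Sum.inl v, by simp, rfl⟩
      · by_cases hx : x = j
        · subst hx
          obtain ⟨z, hz, n', hn'⟩ := hit (Sum.inr (x, n)) (by simp [hj, hjb])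
          refine ⟨_, ?_, hz⟩
          rw [hn']
          simpa using ht
        · exact ⟨_, ht, by simp [ext, C, hx]⟩)
  refine ⟨q, hpq, hqF, ?_⟩
  rw [q.rng j (hqF ▸ hj), hqF]
  ext t
  constructor
  · rintro ⟨z, rfl⟩
    simp only [hq]
    exact maps j _ (hr z)
  · intro ht
    obtain ⟨z, hz, -⟩ := hit t ht
    exact ⟨z, by simp only [hq, hz]⟩

theorem dense_C {b : L} (hbot : ∀ x, b ≤ x) (p : Cond b) (l : L) {f : ℕ → ℕ} (hf : Computable f) :
    ∃ q : Cond b, p ≤ q ∧ l ∈ q.F ∧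
      ((∃ j ∈ q.F, Set.range (fun z => q.g l (f z)) = Set.range (q.g j)) ∨
        ∀ z, ∃ v, q.g l (f z) = Sum.inl v) := by
  classical
  obtain ⟨p', hpp, hl⟩ := add_point hbot p l
  suffices H : ∃ q : Cond b, p' ≤ q ∧ l ∈ q.F ∧
      ((∃ j ∈ q.F, Set.range (fun z => q.g l (f z)) = Set.range (q.g j)) ∨
        ∀ z, ∃ v, q.g l (f z) = Sum.inl v) by
    obtain ⟨q, h1, h2⟩ := H
    exact ⟨q, hpp.trans h1, h2⟩
  clear hpp p
  have hbd : ∀ s : Finset L, (∀ x ∈ s, ¬ {n | ∃ z, p'.g l (f z) = Sum.inr (x, n)}.Infinite) →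
      ∃ N, ∀ x ∈ s, ∀ n z, p'.g l (f z) = Sum.inr (x, n) → n < N := by
    intro s hs
    have h1 : ∀ x ∈ s, ∃ N, ∀ n z, p'.g l (f z) = Sum.inr (x, n) → n < N := by
      intro x hx
      obtain ⟨N, hN⟩ := (Set.not_infinite.1 (hs x hx)).bddAbove
      exact ⟨N + 1, fun n z h => Nat.lt_succ_of_le (hN ⟨z, h⟩)⟩
    choose! N hN using h1
    exact ⟨s.sup N, fun x hx n z h => lt_of_lt_of_le (hN x hx n z h) (Finset.le_sup hx)⟩
  have hin : ∀ z x n, p'.g l (f z) = Sum.inr (x, n) → x ∈ p'.F ∧ x ≤ l ∧ x ≠ b := by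
    intro z x n h
    have : p'.g l (f z) ∈ In b p'.F l := by rw [← p'.rng l hl]; exact ⟨_, rfl⟩
    rw [h] at this
    simpa using this
  let J := p'.F.filter (fun x => {n | ∃ z, p'.g l (f z) = Sum.inr (x, n)}.Infinite)
  by_cases hJ : J.Nonempty
  · obtain ⟨j, hjJ, hmax⟩ := J.exists_maximal hJ
    have hj := (Finset.mem_filter.1 hjJ).1
    have hjinf := (Finset.mem_filter.1 hjJ).2
    obtain ⟨N, hN⟩ := hbd (p'.F.filter (fun x => j < x)) (by
      intro x hx hinf
      obtain ⟨hx1, hx2⟩ := Finset.mem_filter.1 hx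
      exact absurd (hmax (Finset.mem_filter.2 ⟨hx1, hinf⟩) hx2.le) (not_le.2 hx2))
    obtain ⟨q, hpq, hqF, hq⟩ := truncate p' (p'.F.filter (fun x => j < x)) N false
    have hjb : j ≠ b := by
      obtain ⟨n, z, hz⟩ := hjinf.nonempty
      exact (hin z j n hz).2.2
    obtain ⟨r, hqr, hrF, hr⟩ := collapse q (l := l) (j := j) (hqF ▸ hl) (hqF ▸ hj) hjb hf (by
        intro z
        rw [hq, hqF]
        rcases h : p'.g l (f z) with v | ⟨x, n⟩
        · simp [ext]
        · have h1 := hin z x n h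
          by_cases hjx : j < x
          · have hm : x ∈ p'.F.filter (fun x => j < x) := Finset.mem_filter.2 ⟨h1.1, hjx⟩
            simp only [ext, if_pos hm, if_pos (hN x hm n z h), in_inl]
          · have hm : x ∉ p'.F.filter (fun x => j < x) := fun h => hjx (Finset.mem_filter.1 h).2
            simp only [ext, if_neg hm, in_inr]
            exact ⟨h1.1, not_lt.1 hjx, h1.2.2⟩) (by
        refine hjinf.mono ?_
        rintro n ⟨z, hz⟩
        refine ⟨z, ?_⟩
        rw [hq, hz]
        simp [ext])
    exact ⟨r, hpq.trans hqr, by rw [hrF, hqF]; exact hl, Or.inl ⟨j, by rw [hrF, hqF]; exact hj, hr⟩⟩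
  · obtain ⟨N, hN⟩ := hbd p'.F (fun x hx hinf => hJ ⟨x, Finset.mem_filter.2 ⟨hx, hinf⟩⟩)
    obtain ⟨q, hpq, hqF, hq⟩ := truncate p' p'.F N false
    refine ⟨q, hpq, hqF ▸ hl, Or.inr fun z => ?_⟩
    rw [hq]
    rcases h : p'.g l (f z) with v | ⟨x, n⟩
    · exact ⟨v, rfl⟩
    · have h1 := hin z x n h
      exact ⟨false, by simp only [ext, if_pos h1.1, if_pos (hN x h1.1 n z h)]⟩

theorem dense_D {b : L} (hbot : ∀ x, b ≤ x) (p : Cond b) {i j : L} (hij : i < j) (f : ℕ → ℕ) :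
    ∃ q : Cond b, p ≤ q ∧ i ∈ q.F ∧ j ∈ q.F ∧
      ∃ z v, q.g j z = Sum.inl v ∧ q.g i (f z) = Sum.inl (!v) := by
  classical
  obtain ⟨p1, h1, hi1⟩ := add_point hbot p i
  obtain ⟨p2, h2, hj2⟩ := add_point hbot p1 j
  have hi2 : i ∈ p2.F := h2.1 hi1
  have hjb : j ≠ b := fun h => absurd (hbot i) (not_le.2 (h ▸ hij))
  obtain ⟨z, hz⟩ : (Sum.inr (j, 0) : Tok L) ∈ Set.range (p2.g j) := by
    rw [p2.rng j hj2]; simp [hj2, hjb]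
  have hin : p2.g i (f z) ∈ In b p2.F i := by rw [← p2.rng i hi2]; exact ⟨_, rfl⟩
  obtain ⟨p3, h3, h3F, hz3, w, hw⟩ : ∃ q : Cond b, p2 ≤ q ∧ q.F = p2.F ∧
      q.g j z = Sum.inr (j, 0) ∧ ∃ w, q.g i (f z) = Sum.inl w := by
    rcases h : p2.g i (f z) with w | ⟨x, n⟩
    · exact ⟨p2, le_rfl, rfl, hz, w, h⟩
    · rw [h] at hin
      have hxj : j ≠ x := fun h => absurd (in_inr.1 hin).2.1 (not_le.2 (h ▸ hij))
      obtain ⟨q, hpq, hqF, hq⟩ := truncate p2 {x} (n + 1) false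
      refine ⟨q, hpq, hqF, ?_, false, ?_⟩
      · rw [hq, hz]; simp [ext, hxj]
      · rw [hq, h]; simp [ext]
  obtain ⟨q, hpq, hqF, hq⟩ := truncate p3 {j} 1 (!w)
  refine ⟨q, h1.trans (h2.trans (h3.trans hpq)), ?_, ?_, z, !w, ?_, ?_⟩
  · rw [hqF, h3F]; exact hi2
  · rw [hqF, h3F]; exact hj2
  · rw [hq, hz3]; simp [ext]
  · rw [hq, hw]; simp [ext]

instance : Countable {f : ℕ → ℕ // Computable f} := by
  have : ∀ f : {f : ℕ → ℕ // Computable f}, ∃ c : Nat.Partrec.Code, c.eval = (f.1 : ℕ →. ℕ) :=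
    fun f => Nat.Partrec.Code.exists_code.1 (Partrec.nat_iff.1 f.2.partrec)
  choose c hc using this
  refine Function.Injective.countable (f := c) ?_
  intro f g h
  have h2 : ((f.1 : ℕ → ℕ) : ℕ →. ℕ) = (g.1 : ℕ →. ℕ) := by rw [← hc f, ← hc g, h]
  apply Subtype.ext
  funext n
  have := congrFun h2 n
  simpa using this

/-- Existence of a generic ideal. -/
theorem exists_generic {b : L} (hbot : ∀ x, b ≤ x) : ∃ I : Order.Ideal (Cond b),
    (∀ l, ∃ p ∈ I, l ∈ p.F) ∧
    (∀ l (f : ℕ → ℕ), Computable f → ∃ q ∈ I, l ∈ q.F ∧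
      ((∃ j ∈ q.F, Set.range (fun z => q.g l (f z)) = Set.range (q.g j)) ∨
        ∀ z, ∃ v, q.g l (f z) = Sum.inl v)) ∧
    (∀ i j (f : ℕ → ℕ), i < j → Computable f → ∃ q ∈ I, i ∈ q.F ∧ j ∈ q.F ∧
      ∃ z v, q.g j z = Sum.inl v ∧ q.g i (f z) = Sum.inl (!v)) := by
  classical
  let CF := {f : ℕ → ℕ // Computable f}
  let ι := L ⊕ (L × CF) ⊕ ({w : L × L // w.1 < w.2} × CF)
  letI : Encodable ι := Encodable.ofCountable ι
  let D : ι → Order.Cofinal (Cond b) := Sum.elim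
    (fun l => ⟨{p | l ∈ p.F}, fun p => by
      obtain ⟨q, h1, h2⟩ := add_point hbot p l
      exact ⟨q, h2, h1⟩⟩)
    (Sum.elim
      (fun w => ⟨{q | w.1 ∈ q.F ∧
        ((∃ j ∈ q.F, Set.range (fun z => q.g w.1 (w.2.1 z)) = Set.range (q.g j)) ∨
          ∀ z, ∃ v, q.g w.1 (w.2.1 z) = Sum.inl v)}, fun p => by
        obtain ⟨q, h1, h2⟩ := dense_C hbot p w.1 w.2.2
        exact ⟨q, h2, h1⟩⟩)
      (fun w => ⟨{q | w.1.1.1 ∈ q.F ∧ w.1.1.2 ∈ q.F ∧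
        ∃ z v, q.g w.1.1.2 z = Sum.inl v ∧ q.g w.1.1.1 (w.2.1 z) = Sum.inl (!v)}, fun p => by
        obtain ⟨q, h1, h2⟩ := dense_D hbot p w.1.2 w.2.1
        exact ⟨q, h2, h1⟩⟩))
  let p0 : Cond b := ⟨∅, fun _ _ => Sum.inl true, by simp, by simp⟩
  refine ⟨Order.idealOfCofinals p0 D, fun l => ?_, fun l f hf => ?_, fun i j f hij hf => ?_⟩
  · obtain ⟨q, h1, h2⟩ := Order.cofinal_meets_idealOfCofinals p0 D (Sum.inl l)
    exact ⟨q, h2, h1⟩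
  · obtain ⟨q, h1, h2⟩ := Order.cofinal_meets_idealOfCofinals p0 D (Sum.inr (Sum.inl (l, ⟨f, hf⟩)))
    exact ⟨q, h2, h1⟩
  · obtain ⟨q, h1, h2⟩ := Order.cofinal_meets_idealOfCofinals p0 D
      (Sum.inr (Sum.inr (⟨(i, j), hij⟩, ⟨f, hf⟩)))
    exact ⟨q, h2, h1⟩

/-- The generic sets. -/
def gen {b : L} (I : Order.Ideal (Cond b)) (l : L) (z : ℕ) : Prop :=
  ∃ p ∈ I, l ∈ p.F ∧ p.g l z = Sum.inl true

theorem gen_congr {b : L} {I : Order.Ideal (Cond b)} {p : Cond b} (hp : p ∈ I) {l k : L}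
    (hl : l ∈ p.F) (hk : k ∈ p.F) {a c : ℕ} (h : p.g l a = p.g k c) : gen I l a → gen I k c := by
  rintro ⟨q, hq, hlq, hqa⟩
  obtain ⟨r, hr, ⟨hpr, τ, -, h2⟩, hqr, ρ, k1, k2⟩ := I.directed p hp q hq
  refine ⟨r, hr, hpr hk, ?_⟩
  rw [h2 k hk, ← h, ← h2 l hl, k2 l hlq, hqa, k1]

theorem gen_val {b : L} {I : Order.Ideal (Cond b)} {p : Cond b} (hp : p ∈ I) {l : L}
    (hl : l ∈ p.F) {a : ℕ} {v : Bool} (h : p.g l a = Sum.inl v) : gen I l a ↔ v = true := by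
  constructor
  · rintro ⟨q, hq, hlq, hqa⟩
    obtain ⟨r, hr, ⟨hpr, τ, h1, h2⟩, hqr, ρ, k1, k2⟩ := I.directed p hp q hq
    have e : r.g l a = Sum.inl v := by rw [h2 l hl, h, h1]
    have e' : r.g l a = Sum.inl true := by rw [k2 l hlq, hqa, k1]
    exact Sum.inl.inj (e.symm.trans e')
  · rintro rfl
    exact ⟨p, hp, hl, h⟩

theorem gen_red {b : L} {I : Order.Ideal (Cond b)} {p : Cond b} (hp : p ∈ I) {l k : L}
    (hl : l ∈ p.F) (hk : k ∈ p.F) {f f' : ℕ → ℕ} (hf : Computable f) (hf' : Computable f')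
    (h : Set.range (fun z => p.g l (f z)) ⊆ Set.range (fun z => p.g k (f' z))) :
    (fun z => gen I l (f z)) ≤₀ (fun z => gen I k (f' z)) := by
  classical
  have hc : Computable₂ (fun z w : ℕ => decide (p.g l (f z) = p.g k (f' w))) :=
    (Primrec.eq.decide.to_comp).comp (((p.comp l hl).comp hf).comp Computable.fst)
      (((p.comp k hk).comp hf').comp Computable.snd)
  obtain ⟨q, hq, hqs⟩ := comp_search hc (fun z => by
    obtain ⟨w, hw⟩ := h ⟨z, rfl⟩
    exact ⟨w, by simpa using hw.symm⟩)
  refine ⟨q, hq, fun z => ?_⟩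
  have e : p.g l (f z) = p.g k (f' (q z)) := by simpa using (hqs z).1
  exact ⟨gen_congr hp hl hk e, gen_congr hp hk hl e.symm⟩

theorem main {b : L} (hbot : ∀ x, b ≤ x) : ∃ A : L → ℕ → Prop,
    (∀ l, (∃ z, A l z) ∧ ∃ z, ¬ A l z) ∧ (∀ l k, l ≤ k → A l ≤₀ A k) ∧
    (∀ l k, l < k → ¬ A k ≤₀ A l) ∧
    (∀ l (B : ℕ → Prop), B ≤₀ A l → (∃ z, B z) → (∃ z, ¬ B z) → ∃ k, ManyOneEquiv B (A k)) := by
  classical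
  obtain ⟨I, h1, h2, h3⟩ := exists_generic hbot
  have h12 : ∀ l k, ∀ p ∈ I, l ∈ p.F → ∃ q ∈ I, p ≤ q ∧ l ∈ q.F ∧ k ∈ q.F := by
    intro l k p hp hl
    obtain ⟨q, hq, hk⟩ := h1 k
    obtain ⟨r, hr, hpr, hqr⟩ := I.directed p hp q hq
    exact ⟨r, hr, hpr, hpr.1 hl, hqr.1 hk⟩
  refine ⟨gen I, ?_, ?_, ?_, ?_⟩
  · intro l
    obtain ⟨p, hp, hl⟩ := h1 l
    have : ∀ v, ∃ z, p.g l z = Sum.inl v := fun v => by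
      have : (Sum.inl v : Tok L) ∈ Set.range (p.g l) := by rw [p.rng l hl]; simp
      exact this
    obtain ⟨z, hz⟩ := this true
    obtain ⟨w, hw⟩ := this false
    exact ⟨⟨z, (gen_val hp hl hz).2 rfl⟩, w, fun h => by simpa using (gen_val hp hl hw).1 h⟩
  · intro l k hlk
    obtain ⟨p, hp, hl⟩ := h1 l
    obtain ⟨q, hq, -, hl, hk⟩ := h12 l k p hp hl
    refine gen_red hq hl hk Computable.id Computable.id ?_
    change Set.range (q.g l) ⊆ Set.range (q.g k)
    rw [q.rng l hl, q.rng k hk]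
    intro t ht
    rcases t with v | y
    · simp
    · simp only [in_inr] at ht ⊢
      exact ⟨ht.1, ht.2.1.trans hlk, ht.2.2⟩
  · rintro l k hlk ⟨f, hf, hfe⟩
    obtain ⟨q, hq, hl, hk, z, v, hz, hz'⟩ := h3 l k f hlk hf
    have := hfe z
    rw [gen_val hq hk hz, gen_val hq hl hz'] at this
    cases v <;> simp at this
  · rintro l B ⟨f, hf, hfe⟩ ⟨z1, hz1⟩ ⟨z0, hz0⟩
    obtain rfl : B = fun z => gen I l (f z) := funext fun z => propext (hfe z)
    obtain ⟨p, hp, hl, hc⟩ := h2 l f hf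
    obtain ⟨q, hq, hlq, j, hj, hr⟩ : ∃ q ∈ I, l ∈ q.F ∧ ∃ j ∈ q.F,
        Set.range (fun z => q.g l (f z)) = Set.range (q.g j) := by
      rcases hc with ⟨j, hj, hr⟩ | hc
      · exact ⟨p, hp, hl, j, hj, hr⟩
      · obtain ⟨q, hq, ⟨-, τ, t1, t2⟩, hlq, hbq⟩ := h12 l b p hp hl
        have hc' : ∀ z, ∃ v, q.g l (f z) = Sum.inl v := fun z => by
          obtain ⟨v, hv⟩ := hc z
          exact ⟨v, by rw [t2 l hl, hv, t1]⟩
        refine ⟨q, hq, hlq, b, hbq, ?_⟩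
        rw [q.rng b hbq]
        ext t
        rcases t with v | y
        · simp only [in_inl, iff_true, Set.mem_range]
          obtain ⟨v1, hv1⟩ := hc' z1
          obtain ⟨v0, hv0⟩ := hc' z0
          have e1 := (gen_val hq hlq hv1).1 hz1
          have e0 := mt (gen_val hq hlq hv0).2 hz0
          cases v
          · exact ⟨z0, by rw [hv0]; simpa using e0⟩
          · exact ⟨z1, by rw [hv1, e1]⟩
        · simp only [in_inr, Set.mem_range]
          constructor
          · rintro ⟨z, hz⟩
            obtain ⟨v, hv⟩ := hc' z
            rw [hv] at hz
            cases hz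
          · rintro ⟨-, h, h'⟩
            exact absurd (le_antisymm h (hbot _)) h'
    exact ⟨j, gen_red hq hlq hj hf Computable.id hr.subset,
      gen_red hq hj hlq Computable.id hf hr.symm.subset⟩

theorem exists_primcodable (α : Type*) [Countable α] : Nonempty (Primcodable α) := by
  rcases finite_or_infinite α with h | h
  · obtain ⟨n, ⟨e⟩⟩ := Finite.exists_equiv_fin α
    exact ⟨Primcodable.ofEquiv (Fin n) e⟩
  · obtain ⟨d⟩ := nonempty_denumerable α
    exact ⟨Primcodable.ofDenumerable α⟩

end MDeg


/-- The many-one degrees other than the degrees of `∅` and `ℕ`. -/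
def Dm : Set ManyOneDegree :=
  {d | d ≠ ManyOneDegree.of (fun _ : ℕ => False) ∧ d ≠ ManyOneDegree.of (fun _ : ℕ => True)}

/-- Every nonempty countable linear order with least element is isomorphic to a
downward-closed subset (initial segment) of the many-one degrees. -/
theorem initial_segment_of_many_one_degrees
    (L : Type*) [LinearOrder L] [Countable L] [Nonempty L]
    (hbot : ∃ b : L, ∀ x : L, b ≤ x) :
    ∃ S : Set ManyOneDegree, S ⊆ Dm ∧
      (∀ d ∈ S, ∀ d' ∈ Dm, d' ≤ d → d' ∈ S) ∧
      Nonempty (S ≃o L) := by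
  classical
  obtain ⟨b, hb⟩ := hbot
  obtain ⟨inst⟩ := MDeg.exists_primcodable L
  obtain ⟨A, hA1, hA2, hA3, hA4⟩ := MDeg.main hb
  have hmono : StrictMono (fun l => ManyOneDegree.of (A l)) := by
    intro l k hlk
    refine lt_of_le_not_ge ?_ ?_
    · exact ManyOneDegree.of_le_of.2 (hA2 l k hlk.le)
    · intro h
      exact hA3 l k hlk (ManyOneDegree.of_le_of.1 h)
  refine ⟨Set.range (fun l => ManyOneDegree.of (A l)), ?_, ?_, ⟨(hmono.orderIso _).symm⟩⟩
  · rintro _ ⟨l, rfl⟩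
    obtain ⟨⟨z1, h1⟩, z0, h0⟩ := hA1 l
    constructor
    · intro h
      obtain ⟨f, -, hf⟩ := ManyOneDegree.of_le_of.1 h.le
      exact (hf z1).1 h1
    · intro h
      obtain ⟨f, -, hf⟩ := ManyOneDegree.of_le_of.1 h.le
      exact h0 ((hf z0).2 trivial)
  · rintro _ ⟨l, rfl⟩ d' hd' hle
    induction d' using ManyOneDegree.ind_on with
    | _ B =>
      obtain ⟨k, hk⟩ := hA4 l B (ManyOneDegree.of_le_of.1 hle) (by
        by_contra hcon
        push Not at hcon
        apply hd'.1
        congr 1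
        funext z
        exact propext ⟨fun h => hcon z h, False.elim⟩) (by
        by_contra hcon
        push Not at hcon
        apply hd'.2
        congr 1
        funext z
        exact propext ⟨fun _ => trivial, fun _ => hcon z⟩)
      exact ⟨k, (ManyOneDegree.of_eq_of.2 hk).symm⟩
end

section
/- Let U ⊆ ℕ, and let f, g : ℕ → ℕ be total computable functions with range(f) ⊆ range(g). Then f⁻¹(U) ≤ₘ g⁻¹(U). In other words, if W₁ ⊆ W₂ are nonempty computably enumerable sets, then Ψ_U(W₁) ≤ₘ Ψ_U(W₂), where Ψ_U(W) denotes f⁻¹(U) for a total computable f with range(f) = W. -/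
/-- If `f` and `g` are total computable functions with `range f ⊆ range g`, then
`f⁻¹(U) ≤ₘ g⁻¹(U)`; i.e., `W₁ ⊆ W₂` implies `Ψ_U(W₁) ≤ₘ Ψ_U(W₂)`. -/
theorem preimage_manyOneReducible_of_range_subset
    (U : Set ℕ) (f g : ℕ → ℕ) (hf : Computable f) (hg : Computable g)
    (hrange : Set.range f ⊆ Set.range g) :
    ManyOneReducible (fun x : ℕ => f x ∈ U) (fun x : ℕ => g x ∈ U) := by
  have hex : ∀ x, ∃ n, g n = f x := fun x => hrange ⟨x, rfl⟩
  have hc : Computable (fun p : ℕ × ℕ => decide (g p.2 = f p.1)) :=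
    Primrec.eq.decide.to_comp.comp (hg.comp Computable.snd) (hf.comp Computable.fst)
  refine ⟨fun x => Nat.find (hex x), ?_, fun x => ?_⟩
  · exact Computable.find (P := fun x n => g n = f x) ⟨inferInstance, hc⟩ hex
  · simp only [Nat.find_spec (hex x)]
end

section
/- Let U ⊆ ℕ, and let f, g : ℕ → ℕ be total computable functions such that the symmetric difference of range(f) and range(g) is finite. Assume moreover that the four sets range(f) ∩ U, range(f) \ U, range(g) ∩ U, and range(g) \ U are all nonempty. Then f⁻¹(U) ≡ₘ g⁻¹(U). -/
theorem exists_patch (U : Set ℕ) (g : ℕ → ℕ) (a b : ℕ) (ha : g a ∈ U) (hb : g b ∉ U)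
    (S : Set ℕ) (hS : S.Finite) :
    ∃ c : ℕ → ℕ, Computable c ∧ (∀ v n, c v = n + 1 → (v ∈ U ↔ g n ∈ U)) ∧
      ∀ v ∈ S, c v ≠ 0 := by
  induction S, hS using Set.Finite.induction_on with
  | empty => exact ⟨fun _ => 0, Computable.const 0, by simp, by simp⟩
  | @insert s S _ _ ih =>
    obtain ⟨c, hc, h1, h2⟩ := ih
    obtain ⟨k, hk⟩ : ∃ k, (s ∈ U ↔ g k ∈ U) := by
      by_cases h : s ∈ U
      · exact ⟨a, by tauto⟩
      · exact ⟨b, by tauto⟩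
    refine ⟨fun v => bif decide (v = s) then k + 1 else c v, ?_, ?_, ?_⟩
    · exact Computable.cond
        ((Primrec.eq.decide.comp Primrec.id (Primrec.const s)).to_comp)
        (Computable.const _) hc
    · intro v n h
      by_cases e : v = s
      · simp [e] at h
        subst h; subst e; exact hk
      · simp [e] at h
        exact h1 v n h
    · intro v hv
      by_cases e : v = s
      · simp [e]
      · simp only [e, decide_false, cond_false]
        exact h2 v (hv.resolve_left e)

theorem preimage_reducible_aux
    (U : Set ℕ) (f g : ℕ → ℕ) (hf : Computable f) (hg : Computable g)
    (hfin : (Set.range f \ Set.range g).Finite)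
    (h3 : (Set.range g ∩ U).Nonempty) (h4 : (Set.range g \ U).Nonempty) :
    ManyOneReducible (fun x : ℕ => f x ∈ U) (fun x : ℕ => g x ∈ U) := by
  obtain ⟨_, ⟨a, rfl⟩, ha⟩ := h3
  obtain ⟨_, ⟨b, rfl⟩, hb⟩ := h4
  obtain ⟨c, hc, hc1, hc2⟩ := exists_patch U g a b ha hb _ hfin
  let p : ℕ → ℕ → Bool := fun x n => decide (g n = f x) || decide (c (f x) = n + 1)
  have hfx : Computable fun q : ℕ × ℕ => f q.1 := hf.comp Computable.fst
  have hp : Computable₂ p := by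
    have e1 : Computable fun q : ℕ × ℕ => decide (g q.2 = f q.1) :=
      Computable₂.comp Primrec.eq.decide.to_comp (hg.comp Computable.snd) hfx
    have e2 : Computable fun q : ℕ × ℕ => decide (c (f q.1) = q.2 + 1) :=
      Computable₂.comp Primrec.eq.decide.to_comp (hc.comp hfx)
        (Computable.succ.comp Computable.snd)
    have e3 := Computable₂.comp Primrec.or.to_comp e1 e2
    exact e3
  have hex : ∀ x, ∃ n, p x n = true := by
    intro x
    by_cases h : f x ∈ Set.range g
    · obtain ⟨n, hn⟩ := h
      exact ⟨n, by simp [p, hn]⟩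
    · obtain ⟨n, hn⟩ := Nat.exists_eq_succ_of_ne_zero (hc2 (f x) ⟨⟨x, rfl⟩, h⟩)
      exact ⟨n, by simp [p, hn]⟩
  have key : ∀ x n, p x n = true → (f x ∈ U ↔ g n ∈ U) := by
    intro x n h
    simp only [p, Bool.or_eq_true, decide_eq_true_eq] at h
    rcases h with h | h
    · rw [h]
    · exact hc1 _ _ h
  refine ⟨fun x => Nat.find (hex x), ?_, ?_⟩
  · refine Partrec.of_eq (Partrec.rfind (p := fun x n => Part.some (p x n)) hp.partrec₂) ?_
    intro x
    refine Part.eq_some_iff.2 (Nat.mem_rfind.2 ⟨?_, ?_⟩)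
    · simpa using (Nat.find_spec (hex x)).symm
    · intro m hm
      simpa using Nat.find_min (hex x) hm
  · intro x
    exact key x _ (Nat.find_spec (hex x))

/-- If `f` and `g` are total computable functions whose ranges differ only by a
finite set, and the sets `range f ∩ U`, `range f \ U`, `range g ∩ U`, `range g \ U`
are all nonempty, then `f⁻¹(U)` and `g⁻¹(U)` are many-one equivalent. -/
theorem preimage_manyOneEquiv_of_range_symmDiff_finite
    (U : Set ℕ) (f g : ℕ → ℕ) (hf : Computable f) (hg : Computable g)
    (hfin : ((Set.range f \ Set.range g) ∪ (Set.range g \ Set.range f)).Finite)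
    (h1 : (Set.range f ∩ U).Nonempty) (h2 : (Set.range f \ U).Nonempty)
    (h3 : (Set.range g ∩ U).Nonempty) (h4 : (Set.range g \ U).Nonempty) :
    ManyOneEquiv (fun x : ℕ => f x ∈ U) (fun x : ℕ => g x ∈ U) := by
  exact ⟨preimage_reducible_aux U f g hf hg (hfin.subset Set.subset_union_left) h3 h4,
    preimage_reducible_aux U g f hg hf (hfin.subset Set.subset_union_right) h1 h2⟩
end
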